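/- Let R be a 3-dimensional regular local ring with m = (x, y, z), and I the ideal of maximal minors of ((x, y, z), (y, z, x²)). For every n ≥ 1, with q = ⌊n/2⌋, one has depth R/(Iⁿ :_R m^q) > 0, and hence the n-th symbolic power satisfies I^{(n)} = Iⁿ :_R m^q. -/

import Mathlib

open IsLocalRing

/-- The `n`-th symbolic power `I⁽ⁿ⁾ = ⋂_{p ∈ Min(R/I)} (IⁿR_p ∩ R)`. -/
noncomputable def symbolicPower {R : Type*} [CommRing R] (I : Ideal R) (n : ℕ) : Ideal R :=
  ⨅ p : I.minimalPrimes,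
    haveI : Ideal.IsPrime (p : Ideal R) := p.2.1.1
    Ideal.comap (algebraMap R (Localization.AtPrime (p : Ideal R)))
      (Ideal.map (algebraMap R (Localization.AtPrime (p : Ideal R))) (I ^ n))

section Dimension

variable {R : Type*} [CommRing R]

theorem ringKrullDim_quotient_succ_le_of_lt {p q : Ideal R} [q.IsPrime] (h : q < p) :
    ringKrullDim (R ⧸ p) + 1 ≤ ringKrullDim (R ⧸ q) := by
  obtain ⟨r, hrp, hrq⟩ := SetLike.exists_of_lt h
  refine ringKrullDim_succ_le_of_surjective (Ideal.Quotient.factor h.le)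
    (Ideal.Quotient.factor_surjective h.le) (r := Ideal.Quotient.mk q r) ?_ ?_
  · rw [mem_nonZeroDivisors_iff_ne_zero]
    rwa [Ne, Ideal.Quotient.eq_zero_iff_mem]
  · simpa [Ideal.Quotient.eq_zero_iff_mem] using hrp

theorem exists_isPrime_le_ringKrullDim_quotient {J : Ideal R} {n : ℕ}
    (h : (n : WithBot ℕ∞) ≤ ringKrullDim (R ⧸ J)) :
    ∃ Q : Ideal R, Q.IsPrime ∧ J ≤ Q ∧ (n : WithBot ℕ∞) ≤ ringKrullDim (R ⧸ Q) := by
  rw [ringKrullDim_quotient, Order.le_krullDim_iff] at h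
  obtain ⟨p, hp⟩ := h
  refine ⟨p.head.1.asIdeal, p.head.1.isPrime, p.head.2, ?_⟩
  rw [ringKrullDim_quotient, Order.le_krullDim_iff]
  exact ⟨⟨p.length, fun i ↦ ⟨(p i).1, p.head_le i⟩, fun i ↦ p.step i⟩, hp⟩

variable [IsNoetherianRing R] [IsLocalRing R]

theorem ringKrullDim_quotient_le_quotient_sup_span_singleton (J : Ideal R) {x : R}
    (hx : x ∈ maximalIdeal R) :
    ringKrullDim (R ⧸ J) ≤ ringKrullDim (R ⧸ J ⊔ Ideal.span {x}) + 1 := by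
  have hS : (({Ideal.Quotient.mk J x} : Finset (R ⧸ J)) : Set (R ⧸ J)) ⊆ Ring.jacobson (R ⧸ J) := by
    rw [Finset.coe_singleton, Set.singleton_subset_iff, SetLike.mem_coe, ← Ideal.jacobson_bot,
      ← Ideal.mem_comap, Ideal.comap_jacobson_of_surjective Ideal.Quotient.mk_surjective]
    exact maximalIdeal_le_jacobson _ hx
  refine (ringKrullDim_le_ringKrullDim_quotient_add_card _ hS).trans_eq ?_
  have e := DoubleQuot.quotQuotEquivQuotSup J (Ideal.span {x})
  rw [Ideal.map_span, Set.image_singleton] at e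
  rw [Finset.coe_singleton, ringKrullDim_eq_of_ringEquiv e, Finset.card_singleton, Nat.cast_one]

theorem isPrime_and_notMem_of_isPrime_sup_span_singleton {J : Ideal R} {x : R}
    (hx : x ∈ maximalIdeal R) [hK : (J ⊔ Ideal.span {x}).IsPrime] {d : ℕ}
    (hd : ringKrullDim (R ⧸ J ⊔ Ideal.span {x}) = d)
    (hJ : ((d + 1 : ℕ) : WithBot ℕ∞) ≤ ringKrullDim (R ⧸ J)) :
    J.IsPrime ∧ x ∉ J := by
  obtain ⟨Q, hQ, hJQ, hdQ⟩ := exists_isPrime_le_ringKrullDim_quotient hJ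
  have hxQ : x ∉ Q := fun hxQ ↦ by
    have hle : J ⊔ Ideal.span {x} ≤ Q := sup_le hJQ ((Ideal.span_singleton_le_iff_mem _).2 hxQ)
    have := hdQ.trans ((ringKrullDim_le_of_surjective (Ideal.Quotient.factor hle)
      (Ideal.Quotient.factor_surjective hle)).trans_eq hd)
    norm_cast at this
    omega
  have hQK : Q ≤ J ⊔ Ideal.span {x} := by
    by_contra hQK
    have hlt : J ⊔ Ideal.span {x} < Q ⊔ Ideal.span {x} :=
      lt_of_le_not_ge (sup_le_sup_right hJQ _) fun h ↦ hQK (le_sup_left.trans h)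
    have h1 := ringKrullDim_quotient_succ_le_of_lt hlt
    have h2 := hdQ.trans (ringKrullDim_quotient_le_quotient_sup_span_singleton Q hx)
    have := (h2.trans h1).trans_eq hd
    norm_cast at this
    omega
  have hQJ : Q ≤ J := by
    refine Submodule.le_of_le_smul_of_le_jacobson_bot (I := Ideal.span {x})
      (IsNoetherian.noetherian Q) ?_ fun q hq ↦ ?_
    · rw [Ideal.span_singleton_le_iff_mem, IsLocalRing.jacobson_eq_maximalIdeal ⊥ bot_ne_top]
      exact hx
    · obtain ⟨j, hj, r, hr, rfl⟩ := Submodule.mem_sup.1 (hQK hq)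
      obtain ⟨r, rfl⟩ := Ideal.mem_span_singleton'.1 hr
      refine Submodule.add_mem_sup hj ?_
      rw [mul_comm]
      refine Submodule.smul_mem_smul (Ideal.mem_span_singleton_self x) ?_
      exact (hQ.mem_or_mem ((Submodule.add_mem_iff_right _ (hJQ hj)).1 hq)).resolve_right hxQ
  obtain rfl := le_antisymm hQJ hJQ
  exact ⟨hQ, hxQ⟩

theorem isPrime_span_of_maximalIdeal_eq_span_triple (hdim : ringKrullDim R = 3) {x y z : R}
    (h : maximalIdeal R = Ideal.span {x, y, z}) :
    x ≠ 0 ∧ IsDomain R ∧ (Ideal.span {x}).IsPrime ∧ y ∉ Ideal.span {x} ∧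
      (Ideal.span {x, y}).IsPrime ∧ z ∉ Ideal.span {x, y} := by
  have hx : x ∈ maximalIdeal R := h ▸ Ideal.subset_span (by simp)
  have hy : y ∈ maximalIdeal R := h ▸ Ideal.subset_span (by simp)
  have hz : z ∈ maximalIdeal R := h ▸ Ideal.subset_span (by simp)
  have e1 : Ideal.span {x} = ⊥ ⊔ Ideal.span {x} := by simp
  have e2 : Ideal.span {x, y} = Ideal.span {x} ⊔ Ideal.span {y} := Ideal.span_insert _ _
  have e3 : maximalIdeal R = Ideal.span {x, y} ⊔ Ideal.span {z} := by
    rw [h, Ideal.span_insert, Ideal.span_insert, Ideal.span_insert, sup_assoc]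
  have d0 : ringKrullDim (R ⧸ (⊥ : Ideal R)) = (3 : ℕ) := by
    rw [ringKrullDim_eq_of_ringEquiv (RingEquiv.quotientBot R), hdim]; rfl
  have d3 : ringKrullDim (R ⧸ maximalIdeal R) = 0 := ringKrullDim_eq_zero_of_field (ResidueField R)
  have i0 := ringKrullDim_quotient_le_quotient_sup_span_singleton ⊥ hx
  have i1 := ringKrullDim_quotient_le_quotient_sup_span_singleton (Ideal.span {x}) hy
  have i2 := ringKrullDim_quotient_le_quotient_sup_span_singleton (Ideal.span {x, y}) hz
  rw [← e1, d0] at i0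
  rw [← e2] at i1
  rw [← e3, d3] at i2
  obtain ⟨d1, d2⟩ : ringKrullDim (R ⧸ Ideal.span {x}) = (2 : ℕ) ∧
      ringKrullDim (R ⧸ Ideal.span {x, y}) = (1 : ℕ) := by
    generalize ringKrullDim (R ⧸ Ideal.span {x}) = u at *
    generalize ringKrullDim (R ⧸ Ideal.span {x, y}) = v at *
    induction u with
    | bot => simp at i0
    | coe u =>
      induction v with
      | bot => simp at i1
      | coe v =>
        norm_cast at i0 i1 i2 ⊢
        lift v to ℕ using ne_top_of_le_ne_top (by simp) i2
        lift u to ℕ using ne_top_of_le_ne_top (by simp) i1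
        norm_cast at i0 i1 i2 ⊢
        have i0 : 3 ≤ u + 1 := ENat.natCast_le_natCast.1 (by exact_mod_cast i0)
        exact ⟨congrArg _ (show u = 2 by omega), by omega⟩
  obtain ⟨p2, hz2⟩ := isPrime_and_notMem_of_isPrime_sup_span_singleton (J := Ideal.span {x, y})
    hz (hK := e3 ▸ inferInstance) (d := 0) (by rw [← e3, d3]; rfl) d2.ge
  obtain ⟨p1, hy1⟩ := isPrime_and_notMem_of_isPrime_sup_span_singleton (J := Ideal.span {x})
    hy (hK := e2 ▸ p2) (d := 1) (by rw [← e2, d2]) d1.ge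
  obtain ⟨p0, hx0⟩ := isPrime_and_notMem_of_isPrime_sup_span_singleton (J := ⊥)
    hx (hK := e1 ▸ p1) (d := 2) (by rw [← e1, d1]) d0.ge
  exact ⟨hx0, IsDomain.of_bot_isPrime R, p1, hy1, p2, hz2⟩

end Dimension
section Algebra

variable {R : Type*} [CommRing R]

/-- The element with `x * D = b ^ 2 - a * c`, where `a = z² - x²y`, `b = x³ - yz`, `c = y² - xz`. -/
def spaceCurveElement (x y z : R) : R := x ^ 5 - 3 * x ^ 2 * y * z + x * y ^ 3 + z ^ 3

/-- The ideal `(a, b, c)` of maximal minors. -/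
def spaceCurveIdeal (x y z : R) : Ideal R :=
  Ideal.span {z ^ 2 - x ^ 2 * y, x ^ 3 - y * z, y ^ 2 - x * z}

/-- The ideal `I ^ 2 + (D)`. -/
def spaceCurveIdealTwo (x y z : R) : Ideal R :=
  spaceCurveIdeal x y z ^ 2 + Ideal.span {spaceCurveElement x y z}

variable (x y z : R)

local notation "a" => z ^ 2 - x ^ 2 * y
local notation "b" => x ^ 3 - y * z
local notation "c" => y ^ 2 - x * z
local notation "I" => spaceCurveIdeal x y z
local notation "L" => spaceCurveIdealTwo x y z
local notation "D" => spaceCurveElement x y z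

theorem spaceCurveIdeal_eq_add :
    I = Ideal.span {a} + Ideal.span {b} + Ideal.span {c} := by
  rw [spaceCurveIdeal, Ideal.span_insert, Ideal.span_insert, ← sup_assoc]; rfl

theorem sq_spaceCurveIdeal_le : I ^ 2 ≤ L := le_sup_left

theorem span_spaceCurveElement_le : Ideal.span {D} ≤ L := le_sup_right

theorem spaceCurveElement_mem : D ∈ L :=
  span_spaceCurveElement_le x y z (Ideal.mem_span_singleton_self _)

theorem z_sq_sub_mem : a ∈ I := Ideal.subset_span (by simp)

theorem x_cube_sub_mem : b ∈ I := Ideal.subset_span (by simp)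

theorem y_sq_sub_mem : c ∈ I := Ideal.subset_span (by simp)

theorem span_mul_spaceCurveIdealTwo_le :
    Ideal.span {x, y, z} * L ≤ I ^ 2 := by
  have ha := z_sq_sub_mem x y z
  have hb := x_cube_sub_mem x y z
  have hc := y_sq_sub_mem x y z
  rw [spaceCurveIdealTwo, mul_add]
  refine sup_le Ideal.mul_le_right ?_
  rw [Ideal.span_mul_span, Ideal.span_le, pow_two]
  rintro _ ⟨s, hs, t, rfl, rfl⟩
  simp only [SetLike.mem_coe]
  rcases hs with rfl | rfl | rfl
  · rw [show s * spaceCurveElement s y z = (s ^ 3 - y * z) * (s ^ 3 - y * z) -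
      (z ^ 2 - s ^ 2 * y) * (y ^ 2 - s * z) by unfold spaceCurveElement; ring]
    exact sub_mem (Ideal.mul_mem_mul hb hb) (Ideal.mul_mem_mul ha hc)
  · rw [show s * spaceCurveElement x s z = x * ((s ^ 2 - x * z) * (s ^ 2 - x * z)) -
      (z ^ 2 - x ^ 2 * s) * (x ^ 3 - s * z) by unfold spaceCurveElement; ring]
    exact sub_mem (Ideal.mul_mem_left _ _ (Ideal.mul_mem_mul hc hc)) (Ideal.mul_mem_mul ha hb)
  · rw [show s * spaceCurveElement x y s = (s ^ 2 - x ^ 2 * y) * (s ^ 2 - x ^ 2 * y) -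
      x * ((x ^ 3 - y * s) * (y ^ 2 - x * s)) by unfold spaceCurveElement; ring]
    exact sub_mem (Ideal.mul_mem_mul ha ha) (Ideal.mul_mem_left _ _ (Ideal.mul_mem_mul hb hc))

theorem spaceCurveIdealTwo_le :
    L ≤ Ideal.span {c} * I + Ideal.span {D} + Ideal.span {x} * L := by
  have ha := z_sq_sub_mem x y z
  have hb := x_cube_sub_mem x y z
  have hc := y_sq_sub_mem x y z
  have hD := spaceCurveElement_mem x y z
  have hI := sq_spaceCurveIdeal_le x y z
  rw [pow_two] at hI
  have k1 : Ideal.span {c} * I ≤ Ideal.span {c} * I + Ideal.span {D} + Ideal.span {x} * L :=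
    le_sup_left.trans le_sup_left
  have k2 : Ideal.span {D} ≤ Ideal.span {c} * I + Ideal.span {D} + Ideal.span {x} * L :=
    le_sup_right.trans le_sup_left
  have k3 : Ideal.span {x} * L ≤ Ideal.span {c} * I + Ideal.span {D} + Ideal.span {x} * L :=
    le_sup_right
  have kc : ∀ t ∈ I, c * t ∈ Ideal.span {c} * I + Ideal.span {D} + Ideal.span {x} * L :=
    fun t ht ↦ k1 (Ideal.mul_mem_mul (Ideal.mem_span_singleton_self _) ht)
  have kx : ∀ t ∈ L, x * t ∈ Ideal.span {c} * I + Ideal.span {D} + Ideal.span {x} * L :=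
    fun t ht ↦ k3 (Ideal.mul_mem_mul (Ideal.mem_span_singleton_self _) ht)
  have kD : ∀ t, t * D ∈ Ideal.span {c} * I + Ideal.span {D} + Ideal.span {x} * L :=
    fun t ↦ k2 (Ideal.mul_mem_left _ _ (Ideal.mem_span_singleton_self _))
  have aa : a * a = z * D + x * (b * c) := by unfold spaceCurveElement; ring
  have ab : a * b = c * (x * c) + -y * D := by unfold spaceCurveElement; ring
  have bb : b * b = c * a + x * D := by unfold spaceCurveElement; ring
  have hbc := kx _ (hI (Ideal.mul_mem_mul hb hc))
  have haa := aa ▸ add_mem (kD z) hbc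
  have hab := ab ▸ add_mem (kc _ (Ideal.mul_mem_left _ x hc)) (kD (-y))
  have hbb := bb ▸ add_mem (kc _ ha) (kx _ hD)
  conv_lhs => rw [spaceCurveIdealTwo]
  refine sup_le ?_ k2
  rw [pow_two, spaceCurveIdeal, Ideal.span_mul_span, Ideal.span_le]
  rintro _ ⟨s, hs, t, ht, rfl⟩
  simp only [SetLike.mem_coe]
  rcases hs with rfl | rfl | rfl <;> rcases ht with rfl | rfl | rfl
  · exact haa
  · exact hab
  · rw [mul_comm a]; exact kc _ ha
  · rw [mul_comm b]; exact hab
  · exact hbb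
  · rw [mul_comm b]; exact kc _ hb
  · exact kc _ ha
  · exact kc _ hb
  · exact kc _ hc

theorem spaceCurveIdealTwo_pow_succ_le (j : ℕ) :
    L ^ (j + 1) ≤
      Ideal.span {c} * (I * L ^ j) + Ideal.span {D} ^ (j + 1) + Ideal.span {x} * L ^ (j + 1) := by
  induction j with
  | zero => simpa using spaceCurveIdealTwo_le x y z
  | succ j ih =>
    have h := spaceCurveIdealTwo_le x y z
    have hE := span_spaceCurveElement_le x y z
    generalize Ideal.span {D} = E at *
    generalize Ideal.span {c} = C at *
    generalize Ideal.span {x} = X at *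
    calc L ^ (j + 1 + 1) = L * L ^ (j + 1) := pow_succ' _ _
      _ ≤ (C * I + E + X * L) * L ^ (j + 1) := by gcongr
      _ = C * (I * L ^ (j + 1)) + E * L ^ (j + 1) + X * L ^ (j + 2) := by ring
      _ ≤ C * (I * L ^ (j + 1)) + E * (C * (I * L ^ j) + E ^ (j + 1) + X * L ^ (j + 1)) +
          X * L ^ (j + 2) := by gcongr
      _ = C * (I * L ^ (j + 1)) + C * (I * (E * L ^ j)) + E ^ (j + 2) + X * (E * L ^ (j + 1)) +
          X * L ^ (j + 2) := by ring
      _ ≤ C * (I * L ^ (j + 1)) + C * (I * (L * L ^ j)) + E ^ (j + 2) + X * (L * L ^ (j + 1)) +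
          X * L ^ (j + 2) := by gcongr
      _ = (C * (I * L ^ (j + 1)) + C * (I * L ^ (j + 1))) + E ^ (j + 2) +
          (X * L ^ (j + 2) + X * L ^ (j + 2)) := by ring
      _ = _ := by rw [add_idem, add_idem]

theorem spaceCurveIdeal_mul_pow_le (j : ℕ) :
    I * L ^ j ≤
      Ideal.span {c} * L ^ j + Ideal.span {b} * Ideal.span {D} ^ j +
        Ideal.span {a} * Ideal.span {D} ^ j + Ideal.span {x} * (I * L ^ j) := by
  cases j with
  | zero =>
    simp only [pow_zero, mul_one]
    conv_lhs => rw [spaceCurveIdeal_eq_add]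
    exact (by ring : _ = _).trans_le le_sup_left
  | succ j =>
    have h := spaceCurveIdealTwo_pow_succ_le x y z j
    have hE := span_spaceCurveElement_le x y z
    have hI := sq_spaceCurveIdeal_le x y z
    have hs := spaceCurveIdeal_eq_add x y z
    generalize Ideal.span {D} = E at *
    generalize Ideal.span {c} = C at *
    generalize Ideal.span {x} = X at *
    calc I * L ^ (j + 1) ≤ I * (C * (I * L ^ j) + E ^ (j + 1) + X * L ^ (j + 1)) := by gcongr
      _ = C * (I ^ 2 * L ^ j) + I * E ^ (j + 1) + X * (I * L ^ (j + 1)) := by ring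
      _ ≤ C * (L * L ^ j) + I * E ^ (j + 1) + X * (I * L ^ (j + 1)) := by gcongr
      _ = C * L ^ (j + 1) + (Ideal.span {a} + Ideal.span {b} + C) * E ^ (j + 1) +
          X * (I * L ^ (j + 1)) := by rw [← hs]; ring
      _ = C * L ^ (j + 1) + Ideal.span {b} * E ^ (j + 1) + Ideal.span {a} * E ^ (j + 1) +
          C * E ^ (j + 1) + X * (I * L ^ (j + 1)) := by ring
      _ ≤ C * L ^ (j + 1) + Ideal.span {b} * E ^ (j + 1) + Ideal.span {a} * E ^ (j + 1) +
          C * L ^ (j + 1) + X * (I * L ^ (j + 1)) := by gcongr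
      _ = (C * L ^ (j + 1) + C * L ^ (j + 1)) + Ideal.span {b} * E ^ (j + 1) +
          Ideal.span {a} * E ^ (j + 1) + X * (I * L ^ (j + 1)) := by ring
      _ = _ := by rw [add_idem]

theorem spaceCurveIdeal_pow_le (n : ℕ) : I ^ n ≤ I ^ (n % 2) * L ^ (n / 2) := by
  conv_lhs => rw [← Nat.mod_add_div n 2, pow_add, pow_mul]
  gcongr
  exact sq_spaceCurveIdeal_le x y z

theorem span_pow_mul_pow_le_spaceCurveIdeal_pow (n : ℕ) :
    Ideal.span {x, y, z} ^ (n / 2) * (I ^ (n % 2) * L ^ (n / 2)) ≤ I ^ n := by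
  conv_rhs => rw [← Nat.mod_add_div n 2, pow_add, pow_mul]
  rw [mul_left_comm, ← mul_pow]
  gcongr
  exact span_mul_spaceCurveIdealTwo_le x y z

variable {x y z}

theorem exists_spaceCurveElement_pow_eq (j : ℕ) : ∃ e, D ^ j = z ^ (3 * j) + x * e := by
  have h : x ∣ D ^ j - (z ^ 3) ^ j :=
    .trans ⟨x ^ 4 - 3 * x * y * z + y ^ 3, by unfold spaceCurveElement; ring⟩
      (sub_dvd_pow_sub_pow _ _ _)
  obtain ⟨e, he⟩ := h
  exact ⟨e, by rw [pow_mul, ← he]; ring⟩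

theorem mem_of_mul_sub_eq (hx : ∀ r, x * r = 0 → r = 0) (hy : ∀ r, x ∣ y * r → x ∣ r)
    {J K : Ideal R} (hJ : ∀ h, x * h ∈ J → h ∈ J)
    (hK : ∀ t ∈ J, c * t ∈ K) {h g w : R} (hg : g ∈ J) (hw : w ∈ K)
    (e : x * h = c * g + x * w) : h ∈ K := by
  obtain ⟨g, rfl⟩ : x ∣ g := hy _ (hy _ ⟨h - w + z * g, by linear_combination -e⟩)
  have : h - w - c * g = 0 := hx _ (by linear_combination e)
  rw [show h = w + c * g by linear_combination this]
  exact add_mem hw (hK _ (hJ _ hg))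

theorem mem_spaceCurveIdeal_mul_pow_of_mul_mem (hx : ∀ r, x * r = 0 → r = 0)
    (hy : ∀ r, x ∣ y * r → x ∣ r)
    (hz : ∀ (k : ℕ) r, z ^ k * r ∈ Ideal.span {x, y} → r ∈ Ideal.span {x, y})
    (j : ℕ) (ih : ∀ h, x * h ∈ L ^ j → h ∈ L ^ j) (h : R)
    (hh : x * h ∈ I * L ^ j) : h ∈ I * L ^ j := by
  have ha := z_sq_sub_mem x y z
  have hb := x_cube_sub_mem x y z
  have hc := y_sq_sub_mem x y z
  have hD := Ideal.pow_mem_pow (spaceCurveElement_mem x y z) j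
  have hm := spaceCurveIdeal_mul_pow_le x y z j hh
  simp only [Submodule.add_eq_sup, Ideal.span_singleton_pow, Ideal.span_singleton_mul_span_singleton,
    Submodule.mem_sup, Ideal.mem_span_singleton_mul, Ideal.mem_span_singleton'] at hm
  obtain ⟨_, ⟨_, ⟨_, ⟨g, hg, rfl⟩, _, ⟨r, rfl⟩, rfl⟩, _, ⟨s, rfl⟩, rfl⟩, _, ⟨w, hw, rfl⟩, e⟩ := hm
  obtain ⟨d, hd⟩ := exists_spaceCurveElement_pow_eq (x := x) (y := y) (z := z) j
  have hs : s ∈ Ideal.span {x, y} := by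
    apply hz (3 * j + 2)
    rw [Ideal.mem_span_pair]
    refine ⟨h - w + z * g - r * x ^ 2 * D ^ j + s * x * y * D ^ j - s * z ^ 2 * d,
      r * z * D ^ j - y * g, ?_⟩
    rw [hd] at e ⊢
    linear_combination -e
  obtain ⟨u, v, rfl⟩ := Ideal.mem_span_pair.1 hs
  have hr : r - v * z ∈ Ideal.span {x, y} := by
    apply hz (3 * j + 1)
    have : x ∣ y * (y * g - (r - v * z) * z * z ^ (3 * j)) := by
      refine ⟨h - w + z * g - (r - v * z) * x ^ 2 * D ^ j - u * a * D ^ j + v * x * c * D ^ j +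
        (r - v * z) * y * z * d, ?_⟩
      rw [hd] at e ⊢
      linear_combination e
    obtain ⟨t, ht⟩ := hy _ this
    rw [Ideal.mem_span_pair]
    exact ⟨-t, g, by linear_combination ht⟩
  obtain ⟨u', v', hr⟩ := Ideal.mem_span_pair.1 hr
  refine mem_of_mul_sub_eq (z := z) hx hy (J := L ^ j) ih (fun t ht ↦ Ideal.mul_mem_mul hc ht)
    (g := g - v' * z * D ^ j)
    (w := w + u * (a * D ^ j) - v * x * (c * D ^ j) + u' * (b * D ^ j) - v' * (a * D ^ j))
    (sub_mem hg (Ideal.mul_mem_left _ _ hD)) ?_ ?_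
  · refine sub_mem (add_mem (sub_mem (add_mem hw ?_) ?_) ?_) ?_ <;>
      exact Ideal.mul_mem_left _ _ (Ideal.mul_mem_mul ‹_› hD)
  · linear_combination -e - b * D ^ j * hr

theorem mem_spaceCurveIdealTwo_pow_succ_of_mul_mem (hx : ∀ r, x * r = 0 → r = 0)
    (hy : ∀ r, x ∣ y * r → x ∣ r)
    (hz : ∀ (k : ℕ) r, z ^ k * r ∈ Ideal.span {x, y} → r ∈ Ideal.span {x, y})
    (j : ℕ)
    (ih : ∀ h, x * h ∈ I * L ^ j → h ∈ I * L ^ j) (h : R)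
    (hh : x * h ∈ L ^ (j + 1)) : h ∈ L ^ (j + 1) := by
  have ha := z_sq_sub_mem x y z
  have hc := y_sq_sub_mem x y z
  have hI := sq_spaceCurveIdeal_le x y z
  have hD := Ideal.pow_mem_pow (spaceCurveElement_mem x y z) j
  have hm := spaceCurveIdealTwo_pow_succ_le x y z j hh
  simp only [Submodule.add_eq_sup, Ideal.span_singleton_pow,
    Submodule.mem_sup, Ideal.mem_span_singleton_mul, Ideal.mem_span_singleton'] at hm
  obtain ⟨_, ⟨_, ⟨g, hg, rfl⟩, _, ⟨r, rfl⟩, rfl⟩, _, ⟨w, hw, rfl⟩, e⟩ := hm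
  obtain ⟨d, hd⟩ := exists_spaceCurveElement_pow_eq (x := x) (y := y) (z := z) (j + 1)
  have hr : r ∈ Ideal.span {x, y} := by
    apply hz (3 * (j + 1))
    rw [Ideal.mem_span_pair]
    refine ⟨h - w + z * g - r * d, - y * g, ?_⟩
    rw [hd] at e
    linear_combination -e
  obtain ⟨u, r, rfl⟩ := Ideal.mem_span_pair.1 hr
  have hr : r ∈ Ideal.span {x, y} := by
    apply hz (3 * (j + 1))
    have : x ∣ y * (y * g + r * z ^ (3 * (j + 1))) := by
      refine ⟨h - w + z * g - r * y * d - u * D ^ (j + 1), ?_⟩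
      rw [hd] at e ⊢
      linear_combination e
    obtain ⟨t, ht⟩ := hy _ this
    rw [Ideal.mem_span_pair]
    exact ⟨t, -g, by linear_combination -ht⟩
  obtain ⟨u', v, rfl⟩ := Ideal.mem_span_pair.1 hr
  have key : y ^ 2 * D = x * (y * c ^ 2 + a ^ 2) + z * a * c := by unfold spaceCurveElement; ring
  refine mem_of_mul_sub_eq (z := z) hx hy (J := I * L ^ j) ih
    (fun t ht ↦ ?_) (g := g + v * z * (a * D ^ j))
    (w := w + (u + u' * y) * D ^ (j + 1) + v * ((y * c ^ 2 + a ^ 2) * D ^ j))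
    (add_mem hg (Ideal.mul_mem_left _ _ (Ideal.mul_mem_mul ha hD))) ?_ ?_
  · rw [pow_succ']
    have := Ideal.mul_mem_mul hc ht
    rw [← mul_assoc, ← pow_two] at this
    exact Ideal.mul_mono_left hI this
  · refine add_mem (add_mem hw (Ideal.mul_mem_left _ _ (Ideal.pow_mem_pow
      (spaceCurveElement_mem x y z) _))) (Ideal.mul_mem_left _ _ ?_)
    rw [pow_succ']
    exact Ideal.mul_mem_mul (hI (add_mem (Ideal.mul_mem_left _ _ (Ideal.pow_mem_pow hc 2))
      (Ideal.pow_mem_pow ha 2))) hD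
  · linear_combination -e + v * D ^ j * key

theorem mem_spaceCurveIdealTwo_pow_of_mul_mem (hx : ∀ r, x * r = 0 → r = 0)
    (hy : ∀ r, x ∣ y * r → x ∣ r)
    (hz : ∀ (k : ℕ) r, z ^ k * r ∈ Ideal.span {x, y} → r ∈ Ideal.span {x, y})
    (j : ℕ) :
    ∀ h, x * h ∈ L ^ j → h ∈ L ^ j := by
  induction j with
  | zero => simp
  | succ j ih =>
    exact mem_spaceCurveIdealTwo_pow_succ_of_mul_mem hx hy hz j
      (mem_spaceCurveIdeal_mul_pow_of_mul_mem hx hy hz j ih)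

theorem mem_saturated_of_mul_mem (hx : ∀ r, x * r = 0 → r = 0)
    (hy : ∀ r, x ∣ y * r → x ∣ r)
    (hz : ∀ (k : ℕ) r, z ^ k * r ∈ Ideal.span {x, y} → r ∈ Ideal.span {x, y})
    (n : ℕ) (h : R)
    (hh : x * h ∈ I ^ (n % 2) * L ^ (n / 2)) : h ∈ I ^ (n % 2) * L ^ (n / 2) := by
  have := mem_spaceCurveIdealTwo_pow_of_mul_mem hx hy hz (n / 2)
  rcases Nat.mod_two_eq_zero_or_one n with e | e <;> rw [e] at hh ⊢
  · simp only [pow_zero, one_mul] at hh ⊢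
    exact this _ hh
  · rw [pow_one] at hh ⊢
    exact mem_spaceCurveIdeal_mul_pow_of_mul_mem hx hy hz _ this _ hh

end Algebra

section SymbolicPower

variable {R : Type*} [CommRing R]

theorem mem_symbolicPower_iff {I : Ideal R} {n : ℕ} {f : R} :
    f ∈ symbolicPower I n ↔ ∀ p ∈ I.minimalPrimes, ∃ s ∉ p, s * f ∈ I ^ n := by
  simp only [symbolicPower, Ideal.mem_iInf, Subtype.forall, Ideal.mem_comap]
  refine forall₂_congr fun p hp ↦ ?_
  have := hp.1.1
  rw [IsLocalization.algebraMap_mem_map_algebraMap_iff p.primeCompl]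
  rfl

theorem mem_of_pow_mul_mem {J : Ideal R} {x : R} (hsat : ∀ h, x * h ∈ J → h ∈ J) (k : ℕ) (f : R)
    (hf : x ^ k * f ∈ J) : f ∈ J := by
  induction k with
  | zero => simpa using hf
  | succ k ih => exact ih (hsat _ (by rwa [← mul_assoc, ← pow_succ']))

theorem symbolicPower_eq_of_saturated {I J : Ideal R} {x : R} {n k : ℕ}
    (hxI : ∀ p ∈ I.minimalPrimes, x ∉ p)
    (hmin : ∀ p : Ideal R, p.IsPrime → I ≤ p → x ∉ p → p ∈ I.minimalPrimes)
    (hIJ : I ^ n ≤ J) (hsat : ∀ h, x * h ∈ J → h ∈ J) (hxJ : ∀ h ∈ J, x ^ k * h ∈ I ^ n) :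
    symbolicPower I n = J := by
  ext f
  rw [mem_symbolicPower_iff]
  refine ⟨fun hf ↦ ?_, fun hf p hp ↦
    ⟨x ^ k, fun h ↦ hxI p hp (hp.1.1.mem_of_pow_mem _ h), hxJ f hf⟩⟩
  have hrad : x ∈ ((I ^ n).colon {f}).radical := by
    rw [Ideal.radical_eq_sInf, Ideal.mem_sInf]
    rintro p ⟨hle, hp⟩
    by_contra hxp
    have hI : I ≤ p := hp.le_of_pow_le (n := n) fun s hs ↦
      hle (Submodule.mem_colon_singleton.2 (Ideal.mul_mem_right _ _ hs))
    obtain ⟨s, hsp, hs⟩ := hf p (hmin p hp hI hxp)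
    exact hsp (hle (Submodule.mem_colon_singleton.2 hs))
  obtain ⟨l, hl⟩ := hrad
  exact mem_of_pow_mul_mem hsat l f (hIJ (Submodule.mem_colon_singleton.1 hl))

theorem colon_pow_eq_of_saturated {I J m : Ideal R} {x : R} {k : ℕ} (hx : x ∈ m) (hIJ : I ≤ J)
    (hsat : ∀ h, x * h ∈ J → h ∈ J) (hmJ : m ^ k * J ≤ I) :
    Submodule.colon I ((m ^ k : Ideal R) : Set R) = J := by
  ext f
  rw [Submodule.mem_colon]
  refine ⟨fun hf ↦ ?_, fun hf s hs ↦ ?_⟩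
  · refine mem_of_pow_mul_mem hsat k f ?_
    rw [mul_comm]
    exact hIJ (hf _ (Ideal.pow_mem_pow hx k))
  · rw [smul_eq_mul, mul_comm]
    exact hmJ (Ideal.mul_mem_mul hs hf)

/-- If `x` is contained in only one prime ideal over `I`, namely `maximalIdeal R`, then `R ⧸ I` has
dimension at most one, and primes over `I` not containing `x` are minimal. -/
theorem mem_minimalPrimes_of_notMem [IsNoetherianRing R] [IsLocalRing R] {I : Ideal R} {x : R}
    (hx : x ∈ maximalIdeal R)
    (hI : ∀ p : Ideal R, p.IsPrime → I ≤ p → x ∈ p → p = maximalIdeal R)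
    (p : Ideal R) (hp : p.IsPrime) (hIp : I ≤ p) (hxp : x ∉ p) : p ∈ I.minimalPrimes := by
  refine ⟨⟨hp, hIp⟩, fun q ⟨hq, hIq⟩ hqp ↦ ?_⟩
  by_contra hpq
  have h1 := ringKrullDim_quotient_succ_le_of_lt (lt_of_le_not_ge hqp hpq)
  have h2 := ringKrullDim_quotient_succ_le_of_lt
    ((le_maximalIdeal hp.ne_top).lt_of_ne fun h ↦ hxp (h ▸ hx))
  have h3 := ringKrullDim_quotient_le_quotient_sup_span_singleton q hx
  have h4 : ringKrullDim (R ⧸ q ⊔ Ideal.span {x}) ≤ 0 := by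
    rw [ringKrullDim_quotient]
    have : Subsingleton (PrimeSpectrum.zeroLocus (R := R) (q ⊔ Ideal.span {x} : Ideal R)) := by
      have key (P : PrimeSpectrum.zeroLocus (R := R) (q ⊔ Ideal.span {x} : Ideal R)) :
          P.1.asIdeal = maximalIdeal R :=
        hI _ P.1.isPrime (hIq.trans (le_sup_left.trans P.2))
          (P.2 (Ideal.mem_sup_right (Ideal.mem_span_singleton_self x)))
      exact ⟨fun P Q ↦ Subtype.ext (PrimeSpectrum.ext ((key P).trans (key Q).symm))⟩
    exact Order.krullDim_nonpos_of_subsingleton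
  have h5 : ringKrullDim (R ⧸ maximalIdeal R) = 0 := ringKrullDim_eq_zero_of_field (ResidueField R)
  rw [h5] at h2
  have : (0 : WithBot ℕ∞) + 1 + 1 ≤ 0 + 1 :=
    (add_le_add_left h2 1).trans (h1.trans (h3.trans (add_le_add_left h4 1)))
  norm_num at this

end SymbolicPower

/-- Let `R` be a 3-dimensional regular local ring with `m = (x, y, z)` and
`I = (z² - x²y, x³ - yz, y² - xz)`.  For every `n ≥ 1`, with `q = ⌊n/2⌋`, one
has `depth R/(Iⁿ :_R m^q) > 0` (the maximal ideal contains a nonzerodivisor on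
`R/(Iⁿ :_R m^q)`), and hence `I⁽ⁿ⁾ = Iⁿ :_R m^q`. -/
theorem symbolic_power_eq_colon
    {R : Type*} [CommRing R] [IsNoetherianRing R] [IsLocalRing R]
    (hdim : ringKrullDim R = 3)
    (x y z : R) (hreg : maximalIdeal R = Ideal.span {x, y, z})
    (I : Ideal R)
    (hI : I = Ideal.span {z ^ 2 - x ^ 2 * y, x ^ 3 - y * z, y ^ 2 - x * z}) :
    ∀ n : ℕ, 1 ≤ n →
      (∃ r ∈ maximalIdeal R,
        IsSMulRegular
          (R ⧸ (Submodule.colon ((I ^ n : Ideal R) : Submodule R R)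
            ((maximalIdeal R ^ (n / 2) : Ideal R) : Submodule R R))) r) ∧
      symbolicPower I n =
        Submodule.colon ((I ^ n : Ideal R) : Submodule R R)
          ((maximalIdeal R ^ (n / 2) : Ideal R) : Submodule R R) := by
  obtain ⟨hx0, hdom, hpx, hyx, hpxy, hzxy⟩ := isPrime_span_of_maximalIdeal_eq_span_triple hdim hreg
  have hx (r : R) (hr : x * r = 0) : r = 0 := (mul_eq_zero.1 hr).resolve_left hx0
  have hy (r : R) (hr : x ∣ y * r) : x ∣ r := by
    rw [← Ideal.mem_span_singleton] at hr ⊢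
    exact (hpx.mem_or_mem hr).resolve_left hyx
  have hz (k : ℕ) (r : R) (hr : z ^ k * r ∈ Ideal.span {x, y}) : r ∈ Ideal.span {x, y} :=
    (hpxy.mem_or_mem hr).resolve_left fun h ↦ hzxy (hpxy.mem_of_pow_mem _ h)
  have hxm : x ∈ maximalIdeal R := hreg ▸ Ideal.subset_span (by simp)
  change I = spaceCurveIdeal x y z at hI
  subst hI
  have hsat := mem_saturated_of_mul_mem hx hy hz
  have hmax (p : Ideal R) (hp : p.IsPrime) (hIp : spaceCurveIdeal x y z ≤ p) (hxp : x ∈ p) :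
      p = maximalIdeal R := by
    refine le_antisymm (le_maximalIdeal hp.ne_top) ?_
    have hzp : z ∈ p := hp.mem_of_pow_mem 2 <| by
      simpa using add_mem (hIp (z_sq_sub_mem x y z))
        (Ideal.mul_mem_right y p (Ideal.pow_mem_of_mem p hxp 2 two_pos))
    have hyp : y ∈ p := hp.mem_of_pow_mem 2 <| by
      simpa using add_mem (hIp (y_sq_sub_mem x y z)) (Ideal.mul_mem_right z p hxp)
    rw [hreg, Ideal.span_le]
    rintro _ (rfl | rfl | rfl) <;> assumption
  have hxI (p : Ideal R) (hp : p ∈ (spaceCurveIdeal x y z).minimalPrimes) : x ∉ p := fun hxp ↦ by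
    obtain ⟨r, hr, hxr⟩ := Ideal.exists_mul_mem_of_mem_minimalPrimes hp hxp
    exact hr (by simpa using hsat 1 r (by simpa using hxr))
  intro n _
  have hle := spaceCurveIdeal_pow_le x y z n
  have hmJ := span_pow_mul_pow_le_spaceCurveIdeal_pow x y z n
  rw [← hreg] at hmJ
  rw [colon_pow_eq_of_saturated hxm hle (hsat n) hmJ]
  refine ⟨⟨x, hxm, ?_⟩, symbolicPower_eq_of_saturated hxI (mem_minimalPrimes_of_notMem hxm hmax) hle
    (hsat n) fun h hh ↦ hmJ (Ideal.mul_mem_mul (Ideal.pow_mem_pow hxm _) hh)⟩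
  rw [isSMulRegular_iff_right_eq_zero_of_smul]
  intro f hf
  obtain ⟨f, rfl⟩ := Ideal.Quotient.mk_surjective f
  rw [Algebra.smul_def, Ideal.Quotient.algebraMap_eq, ← map_mul,
    Ideal.Quotient.eq_zero_iff_mem] at hf
  exact Ideal.Quotient.eq_zero_iff_mem.2 (hsat n f hf)
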